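/- Let C be a category, and let (A ⊕ B, p_A, p_B, i_A, i_B) and (C' ⊕ D', q_{C'}, q_{D'}, j_{C'}, j_{D'}) be biproducts in the enrichment-free sense of A, B and of C', D' respectively. For morphisms f : A → C' and g : B → D', the unique morphism h : A ⊕ B → C' ⊕ D' induced by the coproduct property of A ⊕ B from the cocone (j_{C'} ∘ f, j_{D'} ∘ g) equals the unique morphism induced by the product property of C' ⊕ D' from the cone (f ∘ p_A, g ∘ p_B). That is, the 'sum' map f ⊕ g defined via the coproduct structure coincides with the map f × g defined via the product structure. -/

import Mathlib

open CategoryTheory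

universe v u

/-- A morphism `a : A ⟶ B` is constant if precomposition with anything gives the same result. -/
def IsConstantMor {C : Type u} [Category.{v} C] {A B : C} (a : A ⟶ B) : Prop :=
  ∀ ⦃X : C⦄ (f g : X ⟶ A), f ≫ a = g ≫ a

/-- A morphism `a : A ⟶ B` is coconstant if postcomposition with anything gives the same result. -/
def IsCoconstantMor {C : Type u} [Category.{v} C] {A B : C} (a : A ⟶ B) : Prop :=
  ∀ ⦃Y : C⦄ (u v : B ⟶ Y), a ≫ u = a ≫ v

/-- `(P, pA, pB, iA, iB)` is a biproduct of `A` and `B` in the enrichment-free sense: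
`(P, pA, pB)` is a product, `(P, iA, iB)` is a coproduct, `pA ∘ iA = id`, `pB ∘ iB = id`,
and the two canonical idempotents `iA ∘ pA` and `iB ∘ pB` on `P` commute. -/
structure IsEFBiproduct {C : Type u} [Category.{v} C] {A B : C} (P : C)
    (pA : P ⟶ A) (pB : P ⟶ B) (iA : A ⟶ P) (iB : B ⟶ P) : Prop where
  isProduct : ∀ (X : C) (f : X ⟶ A) (g : X ⟶ B), ∃! h : X ⟶ P, h ≫ pA = f ∧ h ≫ pB = g
  isCoproduct : ∀ (X : C) (f : A ⟶ X) (g : B ⟶ X), ∃! h : P ⟶ X, iA ≫ h = f ∧ iB ≫ h = g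
  pA_iA : iA ≫ pA = 𝟙 A
  pB_iB : iB ≫ pB = 𝟙 B
  idem_comm : (pB ≫ iB) ≫ (pA ≫ iA) = (pA ≫ iA) ≫ (pB ≫ iB)

/-- The category `C` has zero morphisms: a family `z A B : A ⟶ B` absorbing under
pre- and postcomposition, i.e. `g ∘ z X Y ∘ f = z W Z`. -/
def HasZeroFamily (C : Type u) [Category.{v} C] : Prop :=
  ∃ z : ∀ A B : C, A ⟶ B, ∀ (W X Y Z : C) (f : W ⟶ X) (g : Y ⟶ Z), f ≫ z X Y ≫ g = z W Z

theorem IsEFBiproduct.symm' {C : Type u} [Category.{v} C] {A B P : C}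
    {pA : P ⟶ A} {pB : P ⟶ B} {iA : A ⟶ P} {iB : B ⟶ P}
    (h : IsEFBiproduct P pA pB iA iB) : IsEFBiproduct P pB pA iB iA where
  isProduct X f g := by
    obtain ⟨k, hk, hu⟩ := h.isProduct X g f
    exact ⟨k, hk.symm, fun y hy => hu y hy.symm⟩
  isCoproduct X f g := by
    obtain ⟨k, hk, hu⟩ := h.isCoproduct X g f
    exact ⟨k, hk.symm, fun y hy => hu y hy.symm⟩
  pA_iA := h.pB_iB
  pB_iB := h.pA_iA
  idem_comm := h.idem_comm.symm

theorem IsEFBiproduct.cocone_eq {C : Type u} [Category.{v} C] {A B P : C}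
    {pA : P ⟶ A} {pB : P ⟶ B} {iA : A ⟶ P} {iB : B ⟶ P}
    (h : IsEFBiproduct P pA pB iA iB) {Y : C} (a : A ⟶ Y) (t : B ⟶ Y) :
    iB ≫ pA ≫ a = iB ≫ pA ≫ iA ≫ pB ≫ t := by
  obtain ⟨k, ⟨rfl, rfl⟩, -⟩ := h.isCoproduct Y a t
  have e := congrArg (fun m => iB ≫ m ≫ k) h.idem_comm
  simpa [reassoc_of% h.pB_iB] using e

theorem IsEFBiproduct.cone_eq {C : Type u} [Category.{v} C] {A B P : C}
    {pA : P ⟶ A} {pB : P ⟶ B} {iA : A ⟶ P} {iB : B ⟶ P}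
    (h : IsEFBiproduct P pA pB iA iB) {X : C} (a : X ⟶ A) (s : X ⟶ B) :
    s ≫ iB ≫ pA = a ≫ iA ≫ pB ≫ iB ≫ pA := by
  obtain ⟨k, ⟨rfl, rfl⟩, -⟩ := h.isProduct X a s
  have e := congrArg (fun m => k ≫ m ≫ pA) h.idem_comm
  simpa [h.pA_iA] using e

theorem IsEFBiproduct.cross {C : Type u} [Category.{v} C] {A B C' D' P Q : C}
    {pA : P ⟶ A} {pB : P ⟶ B} {iA : A ⟶ P} {iB : B ⟶ P}
    {qC : Q ⟶ C'} {qD : Q ⟶ D'} {jC : C' ⟶ Q} {jD : D' ⟶ Q}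
    (h1 : IsEFBiproduct P pA pB iA iB) (h2 : IsEFBiproduct Q qC qD jC jD)
    (f : A ⟶ C') (g : B ⟶ D') : g ≫ jD ≫ qC = iB ≫ pA ≫ f := by
  have e := h2.cone_eq (iB ≫ pA ≫ f) g
  have e2 := h1.cocone_eq (f ≫ jC ≫ qD ≫ jD ≫ qC) (iB ≫ pA ≫ f)
  simp only [Category.assoc] at e
  exact e.trans (e2.trans (h1.cocone_eq f (iB ≫ pA ≫ f)).symm)

/-- Given biproducts (in the enrichment-free sense) of `A, B` and of `C', D'`,
and morphisms `f : A ⟶ C'`, `g : B ⟶ D'`, the morphism `f ⊕ g` induced by the coproduct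
structure from the cocone `(jC ∘ f, jD ∘ g)` equals the morphism `f × g` induced by the
product structure from the cone `(f ∘ pA, g ∘ pB)`. -/
theorem stmt9 {C : Type u} [Category.{v} C] {A B C' D' : C}
    {P Q : C} {pA : P ⟶ A} {pB : P ⟶ B} {iA : A ⟶ P} {iB : B ⟶ P}
    {qC : Q ⟶ C'} {qD : Q ⟶ D'} {jC : C' ⟶ Q} {jD : D' ⟶ Q}
    (h1 : IsEFBiproduct P pA pB iA iB) (h2 : IsEFBiproduct Q qC qD jC jD)
    (f : A ⟶ C') (g : B ⟶ D') (h h' : P ⟶ Q)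
    (hh : iA ≫ h = f ≫ jC ∧ iB ≫ h = g ≫ jD)
    (hh' : h' ≫ qC = pA ≫ f ∧ h' ≫ qD = pB ≫ g) :
    h = h' := by
  obtain ⟨k, -, hu⟩ := h2.isProduct P (pA ≫ f) (pB ≫ g)
  have key : h ≫ qC = pA ≫ f ∧ h ≫ qD = pB ≫ g := by
    constructor
    · obtain ⟨m, -, hm⟩ := h1.isCoproduct C' f (iB ≫ pA ≫ f)
      rw [hm (h ≫ qC), hm (pA ≫ f)]
      · exact ⟨by rw [reassoc_of% h1.pA_iA], rfl⟩
      · refine ⟨by rw [reassoc_of% hh.1, h2.pA_iA, Category.comp_id], ?_⟩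
        rw [reassoc_of% hh.2, h1.cross h2 f g]
    · obtain ⟨m, -, hm⟩ := h1.isCoproduct D' (iA ≫ pB ≫ g) g
      rw [hm (h ≫ qD), hm (pB ≫ g)]
      · exact ⟨rfl, by rw [reassoc_of% h1.pB_iB]⟩
      · refine ⟨?_, by rw [reassoc_of% hh.2, h2.pB_iB, Category.comp_id]⟩
        rw [reassoc_of% hh.1, h1.symm'.cross h2.symm' g f]
  rw [hu h key, hu h' hh']
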